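/- Let G^i be a spray with coefficients N^i_j, let F be a Finsler structure on U with metric tensor g_{ij} and inverse metric g^{ij}, and let F̃ be a Finsler structure on U. Assume: (1) ∇g_{ij} = S(g_{ij}) − Σ_k (N^k_i g_{kj} + N^k_j g_{ik}) = 0 on Ω for all i, j (S is the geodesic spray of F); and (2) ∇(∂²F̃/∂y^i∂y^j) = S(∂²F̃/∂y^i∂y^j) − Σ_k (N^k_i ∂²F̃/∂y^k∂y^j + N^k_j ∂²F̃/∂y^i∂y^k) = 0 on Ω for all i, j. Define the (1,1)-tensor H^i_j = F Σ_k g^{ik} ∂²F̃/∂y^k∂y^j on Ω. Then H is geodesically invariant: ∇H^i_j = S(H^i_j) + Σ_k N^i_k H^k_j − Σ_k N^k_j H^i_k = 0 on Ω for all i, j; and consequently, for every positive integer m, the scalar function tr(H^m) (the trace of the m-th matrix power of (H^i_j)) is a first integral of the spray: S(tr(H^m)) = 0 on Ω. -/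

import Mathlib

noncomputable section

/-- A point `(x, y)` of the tangent space coordinates over `ℝⁿ`. -/
abbrev Pt (n : ℕ) : Type := (Fin n → ℝ) × (Fin n → ℝ)

/-- `Ω = U × (ℝⁿ \ {0})`. -/
def OmegaSet {n : ℕ} (U : Set (Fin n → ℝ)) : Set (Pt n) :=
  {p : Pt n | p.1 ∈ U ∧ p.2 ≠ 0}

/-- Partial derivative `∂f/∂x^i`. -/
def pdx {n : ℕ} (f : Pt n → ℝ) (i : Fin n) (p : Pt n) : ℝ :=
  fderiv ℝ f p (Pi.single i 1, 0)

/-- Partial derivative `∂f/∂y^i`. -/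
def pdy {n : ℕ} (f : Pt n → ℝ) (i : Fin n) (p : Pt n) : ℝ :=
  fderiv ℝ f p (0, Pi.single i 1)

/-- Second fibre derivative `∂²f/∂y^i∂y^j`. -/
def pdyy {n : ℕ} (f : Pt n → ℝ) (i j : Fin n) : Pt n → ℝ :=
  pdy (pdy f j) i

/-- The spray vector field applied to a function:
`S(f) = Σ_k (y^k ∂f/∂x^k − 2 G^k ∂f/∂y^k)`. -/
def Sop {n : ℕ} (G : Fin n → Pt n → ℝ) (f : Pt n → ℝ) (p : Pt n) : ℝ :=
  ∑ k, (p.2 k * pdx f k p - 2 * G k p * pdy f k p)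

/-- Connection coefficients `N^i_j = ∂G^i/∂y^j`. -/
def Ncoef {n : ℕ} (G : Fin n → Pt n → ℝ) (i j : Fin n) : Pt n → ℝ :=
  pdy (G i) j

/-- Horizontal derivative `δf/δx^i = ∂f/∂x^i − Σ_j N^j_i ∂f/∂y^j`. -/
def deltax {n : ℕ} (G : Fin n → Pt n → ℝ) (f : Pt n → ℝ) (i : Fin n) (p : Pt n) : ℝ :=
  pdx f i p - ∑ j, Ncoef G j i p * pdy f j p

/-- Dynamical covariant derivative of a `(0,2)` family:
`∇T_{ij} = S(T_{ij}) − Σ_k (N^k_i T_{kj} + N^k_j T_{ik})`. -/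
def nablaT {n : ℕ} (G : Fin n → Pt n → ℝ) (T : Fin n → Fin n → Pt n → ℝ)
    (i j : Fin n) (p : Pt n) : ℝ :=
  Sop G (T i j) p - ∑ k, (Ncoef G k i p * T k j p + Ncoef G k j p * T i k p)

/-- `f` is positively `k`-homogeneous in the fibre variable `y`, on `Ω`. -/
def PosHomog {n : ℕ} (U : Set (Fin n → ℝ)) (k : ℤ) (f : Pt n → ℝ) : Prop :=
  ∀ L : ℝ, 0 < L → ∀ p ∈ OmegaSet U, f (p.1, L • p.2) = L ^ k * f p

/-- A spray: smooth, positively 2-homogeneous coefficients `G^i`. -/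
def IsSpray {n : ℕ} (U : Set (Fin n → ℝ)) (G : Fin n → Pt n → ℝ) : Prop :=
  ∀ i, ContDiffOn ℝ (⊤ : ℕ∞) (G i) (OmegaSet U) ∧ PosHomog U 2 (G i)

/-- Components of the Euler-Lagrange 1-form: `(δ_S f)_i = S(∂f/∂y^i) − ∂f/∂x^i`. -/
def EL {n : ℕ} (G : Fin n → Pt n → ℝ) (f : Pt n → ℝ) (i : Fin n) (p : Pt n) : ℝ :=
  Sop G (pdy f i) p - pdx f i p

/-- The metric tensor `g_{ij} = ½ ∂²(F²)/∂y^i∂y^j` of a Finsler function. -/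
def metricTensor {n : ℕ} (F : Pt n → ℝ) (i j : Fin n) (p : Pt n) : ℝ :=
  (1 / 2) * pdyy (fun q => F q ^ 2) i j p

/-- A Finsler structure on `U`: smooth, positive, positively 1-homogeneous,
with invertible metric tensor at every point of `Ω`. -/
def IsFinsler {n : ℕ} (U : Set (Fin n → ℝ)) (F : Pt n → ℝ) : Prop :=
  ContDiffOn ℝ (⊤ : ℕ∞) F (OmegaSet U) ∧ (∀ p ∈ OmegaSet U, 0 < F p) ∧ PosHomog U 1 F ∧
    ∀ p ∈ OmegaSet U, IsUnit (Matrix.of (fun i j => metricTensor F i j p))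

/-- The `(1,1)`-tensor `H^i_j = F Σ_k g^{ik} ∂²F̃/∂y^k∂y^j`. -/
def Hten {n : ℕ} (F Ft : Pt n → ℝ) (ginv : Fin n → Fin n → Pt n → ℝ)
    (i j : Fin n) (q : Pt n) : ℝ :=
  F q * ∑ k, ginv i k q * pdyy Ft k j q

/-!
Along the spray direction the connection coefficients `N` act like a moving frame: `∇T = 0` for a
`(0,2)`-tensor reads `T' = Nᵀ T + T N`, and `∇H = 0` for a `(1,1)`-tensor reads `H' = H N - N H`.
From `g' = Nᵀ g + g N` one gets `(g⁻¹)' = -g⁻¹ Nᵀ - N g⁻¹`, so the `Nᵀ` terms cancel in `(g⁻¹ T)'`.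
By Euler's identity `F² = yᵀ g y` and the spray moves `y` by `y' = -N y`, so `(F²)' = 0` and the
factor `F` does no harm. Finally `H' = H N - N H` is a Lax equation, which passes to the powers
`H ^ m`, and the trace of a commutator vanishes.
-/

open scoped Matrix Topology

section NormedAlgebra

variable {𝕜 E 𝔸 : Type*} [NontriviallyNormedField 𝕜] [NormedAddCommGroup E] [NormedSpace 𝕜 E]
  [NormedRing 𝔸] [NormedAlgebra 𝕜 𝔸] {A B : E → 𝔸} {p v : E}

theorem fderiv_mul_apply (hA : DifferentiableAt 𝕜 A p) (hB : DifferentiableAt 𝕜 B p) :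
    fderiv 𝕜 (fun q => A q * B q) p v = fderiv 𝕜 A p v * B p + A p * fderiv 𝕜 B p v := by
  simp [fderiv_fun_mul' hA hB, add_comm]

theorem fderiv_ringInverse_apply [HasSummableGeomSeries 𝔸] (hA : DifferentiableAt 𝕜 A p)
    (hunit : IsUnit (A p)) :
    fderiv 𝕜 (fun q => Ring.inverse (A q)) p v =
      -(Ring.inverse (A p) * fderiv 𝕜 A p v * Ring.inverse (A p)) := by
  obtain ⟨u, hu⟩ := hunit
  have hinv := hasFDerivAt_ringInverse (𝕜 := 𝕜) u
  rw [hu] at hinv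
  have hcomp := hinv.comp p hA.hasFDerivAt
  rw [← Function.comp_def, hcomp.fderiv]
  simp [← hu]

theorem fderiv_ringInverse_mul_eq_commutator [HasSummableGeomSeries 𝔸] {M N : 𝔸}
    (hA : DifferentiableAt 𝕜 A p) (hB : DifferentiableAt 𝕜 B p) (hunit : IsUnit (A p))
    (hA' : fderiv 𝕜 A p v = M * A p + A p * N) (hB' : fderiv 𝕜 B p v = M * B p + B p * N) :
    fderiv 𝕜 (fun q => Ring.inverse (A q) * B q) p v =
      Ring.inverse (A p) * B p * N - N * (Ring.inverse (A p) * B p) := by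
  have hinv' : fderiv 𝕜 (fun q => Ring.inverse (A q)) p v =
      -(Ring.inverse (A p) * M) - N * Ring.inverse (A p) := by
    calc fderiv 𝕜 (fun q => Ring.inverse (A q)) p v
        = -(Ring.inverse (A p) * M * (A p * Ring.inverse (A p)))
            - Ring.inverse (A p) * A p * N * Ring.inverse (A p) := by
          rw [fderiv_ringInverse_apply hA hunit, hA']
          noncomm_ring
      _ = _ := by
          rw [Ring.mul_inverse_cancel _ hunit, Ring.inverse_mul_cancel _ hunit, mul_one, one_mul]
  rw [fderiv_mul_apply (hA.inverse hunit) hB, hinv', hB']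
  noncomm_ring

theorem fderiv_smul_eq_commutator {c : E → 𝕜} {N : 𝔸} (hc : DifferentiableAt 𝕜 c p)
    (hA : DifferentiableAt 𝕜 A p) (hc' : fderiv 𝕜 c p v = 0)
    (hA' : fderiv 𝕜 A p v = A p * N - N * A p) :
    fderiv 𝕜 (fun q => c q • A q) p v = (c p • A p) * N - N * (c p • A p) := by
  simp [fderiv_fun_smul hc hA, hc', hA', smul_sub]

theorem fderiv_pow_eq_commutator {N : 𝔸} (hA : DifferentiableAt 𝕜 A p)
    (hA' : fderiv 𝕜 A p v = A p * N - N * A p) (m : ℕ) :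
    fderiv 𝕜 (fun q => A q ^ m) p v = A p ^ m * N - N * A p ^ m := by
  induction m with
  | zero => simp
  | succ m ih =>
    simp only [pow_succ]
    rw [fderiv_mul_apply (hA.fun_pow m) hA, ih, hA']
    noncomm_ring

end NormedAlgebra

section MatrixCalculus

open scoped Matrix.Norms.Operator

variable {𝕜 E ι κ : Type*} [NontriviallyNormedField 𝕜] [NormedAddCommGroup E] [NormedSpace 𝕜 E]
  {p v : E}

theorem fderiv_pi_apply {u : E → ι → 𝕜} (hu : DifferentiableAt 𝕜 u p) (i : ι) :
    fderiv 𝕜 u p v i = fderiv 𝕜 (fun q => u q i) p v := by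
  rw [fderiv_apply hu i]
  rfl

variable {A : E → Matrix ι κ 𝕜}

theorem differentiableAt_matrix [Finite κ] :
    DifferentiableAt 𝕜 A p ↔ ∀ i j, DifferentiableAt 𝕜 (fun q => A q i j) p := by
  have := Fintype.ofFinite κ
  exact differentiableAt_pi.trans (forall_congr' fun _ => differentiableAt_pi)

theorem fderiv_matrix_apply [Finite κ] (hA : DifferentiableAt 𝕜 A p) (i : ι) (j : κ) :
    fderiv 𝕜 A p v i j = fderiv 𝕜 (fun q => A q i j) p v := by
  have := Fintype.ofFinite κ
  have hrow : DifferentiableAt 𝕜 (fun q => A q i) p := differentiableAt_pi.1 hA i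
  rw [fderiv_apply hrow j, fderiv_apply (Φ := A) hA i]
  rfl

variable [Fintype κ] {w : E → κ → 𝕜}

theorem fderiv_dotProduct_apply {u : E → κ → 𝕜} (hu : DifferentiableAt 𝕜 u p)
    (hw : DifferentiableAt 𝕜 w p) :
    fderiv 𝕜 (fun q => u q ⬝ᵥ w q) p v = fderiv 𝕜 u p v ⬝ᵥ w p + u p ⬝ᵥ fderiv 𝕜 w p v := by
  have hui := differentiableAt_pi.1 hu
  have hwi := differentiableAt_pi.1 hw
  simp only [dotProduct, ← Finset.sum_add_distrib]
  rw [fderiv_fun_sum fun i _ => (hui i).fun_mul (hwi i), _root_.sum_apply]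
  refine Finset.sum_congr rfl fun i _ => ?_
  rw [fderiv_mul_apply (hui i) (hwi i), fderiv_pi_apply hu, fderiv_pi_apply hw]

theorem differentiableAt_mulVec (hA : DifferentiableAt 𝕜 A p) (hw : DifferentiableAt 𝕜 w p) :
    DifferentiableAt 𝕜 (fun q => A q *ᵥ w q) p :=
  differentiableAt_pi.2 fun i => DifferentiableAt.fun_sum fun j _ =>
    (differentiableAt_matrix.1 hA i j).fun_mul (differentiableAt_pi.1 hw j)

theorem fderiv_mulVec_apply (hA : DifferentiableAt 𝕜 A p) (hw : DifferentiableAt 𝕜 w p) :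
    fderiv 𝕜 (fun q => A q *ᵥ w q) p v = fderiv 𝕜 A p v *ᵥ w p + A p *ᵥ fderiv 𝕜 w p v := by
  ext i
  have hrow : DifferentiableAt 𝕜 (fun q j => A q i j) p :=
    differentiableAt_pi.2 (differentiableAt_matrix.1 hA i)
  have hrow' : fderiv 𝕜 (fun q j => A q i j) p v = fun j => fderiv 𝕜 A p v i j := by
    ext j
    rw [fderiv_pi_apply hrow, fderiv_matrix_apply hA]
  rw [fderiv_pi_apply (differentiableAt_mulVec hA hw)]
  exact (fderiv_dotProduct_apply hrow hw).trans (by rw [hrow']; rfl)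

theorem fderiv_trace_apply {A : E → Matrix κ κ 𝕜} (hA : DifferentiableAt 𝕜 A p) :
    fderiv 𝕜 (fun q => (A q).trace) p v = (fderiv 𝕜 A p v).trace := by
  simp only [Matrix.trace, Matrix.diag_apply, fderiv_matrix_apply hA]
  rw [fderiv_fun_sum fun i _ => differentiableAt_matrix.1 hA i i, _root_.sum_apply]

theorem fderiv_dotProduct_mulVec_eq_zero {A : E → Matrix κ κ 𝕜} {N : Matrix κ κ 𝕜}
    (hA : DifferentiableAt 𝕜 A p) (hw : DifferentiableAt 𝕜 w p)
    (hA' : fderiv 𝕜 A p v = Nᵀ * A p + A p * N) (hw' : fderiv 𝕜 w p v = -(N *ᵥ w p)) :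
    fderiv 𝕜 (fun q => w q ⬝ᵥ A q *ᵥ w q) p v = 0 := by
  rw [fderiv_dotProduct_apply hw (differentiableAt_mulVec hA hw), fderiv_mulVec_apply hA hw,
    hA', hw', Matrix.add_mulVec, ← Matrix.mulVec_mulVec, ← Matrix.mulVec_mulVec,
    Matrix.mulVec_neg, neg_dotProduct, dotProduct_add, dotProduct_add, dotProduct_neg,
    Matrix.dotProduct_mulVec _ Nᵀ, Matrix.vecMul_transpose]
  ring

end MatrixCalculus

section Homogeneous

variable {n : ℕ} {U : Set (Fin n → ℝ)} {f : Pt n → ℝ} {p : Pt n} {k : ℤ}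

theorem isOpen_OmegaSet (hU : IsOpen U) : IsOpen (OmegaSet U) :=
  (hU.preimage continuous_fst).inter (isOpen_compl_singleton.preimage continuous_snd)

theorem dotProduct_pdx (f : Pt n → ℝ) (p : Pt n) (w : Fin n → ℝ) :
    (w ⬝ᵥ fun i => pdx f i p) = fderiv ℝ f p (w, 0) := by
  have hw : ((w, 0) : Pt n) = ∑ i, w i • ((Pi.single i 1, 0) : Pt n) := by
    simpa using congrArg (LinearMap.inl ℝ _ (Fin n → ℝ)) (pi_eq_sum_univ' w)
  simp only [hw, map_sum, map_smul, dotProduct, pdx, smul_eq_mul]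

theorem dotProduct_pdy (f : Pt n → ℝ) (p : Pt n) (w : Fin n → ℝ) :
    (w ⬝ᵥ fun i => pdy f i p) = fderiv ℝ f p (0, w) := by
  have hw : ((0, w) : Pt n) = ∑ i, w i • ((0, Pi.single i 1) : Pt n) := by
    simpa using congrArg (LinearMap.inr ℝ (Fin n → ℝ) _) (pi_eq_sum_univ' w)
  simp only [hw, map_sum, map_smul, dotProduct, pdy, smul_eq_mul]

theorem differentiableAt_of_contDiffOn_OmegaSet (hU : IsOpen U)
    (hf : ContDiffOn ℝ (⊤ : ℕ∞) f (OmegaSet U)) (hp : p ∈ OmegaSet U) : DifferentiableAt ℝ f p :=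
  (hf.contDiffAt ((isOpen_OmegaSet hU).mem_nhds hp)).differentiableAt (by simp)

theorem contDiffOn_pdy (hU : IsOpen U) (hf : ContDiffOn ℝ (⊤ : ℕ∞) f (OmegaSet U)) (i : Fin n) :
    ContDiffOn ℝ (⊤ : ℕ∞) (pdy f i) (OmegaSet U) :=
  (hf.fderiv_of_isOpen (isOpen_OmegaSet hU) (by simp)).clm_apply contDiffOn_const

theorem PosHomog.euler (hf : PosHomog U k f) (hp : p ∈ OmegaSet U)
    (hd : DifferentiableAt ℝ f p) : (p.2 ⬝ᵥ fun i => pdy f i p) = k * f p := by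
  have hray : HasDerivAt (fun t : ℝ => ((p.1, t • p.2) : Pt n)) (0, p.2) 1 := by
    simpa using (hasDerivAt_const (1 : ℝ) p.1).prodMk ((hasDerivAt_id (1 : ℝ)).smul_const p.2)
  have hchain : HasDerivAt (fun t : ℝ => f (p.1, t • p.2)) (fderiv ℝ f p (0, p.2)) 1 :=
    HasFDerivAt.comp_hasDerivAt (1 : ℝ) (by simpa using hd.hasFDerivAt) hray
  have hpow : HasDerivAt (fun t : ℝ => t ^ k * f p) (k * f p) 1 := by
    simpa using (hasDerivAt_zpow k (1 : ℝ) (Or.inl one_ne_zero)).mul_const (f p)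
  have hhom : (fun t : ℝ => f (p.1, t • p.2)) =ᶠ[𝓝 1] fun t => t ^ k * f p := by
    filter_upwards [lt_mem_nhds one_pos] with t ht using hf t ht p hp
  rw [dotProduct_pdy]
  exact hchain.unique (hpow.congr_of_eventuallyEq hhom)

theorem PosHomog.pdy_of_isOpen (hU : IsOpen U) (hf : PosHomog U k f) (i : Fin n) :
    PosHomog U (k - 1) (pdy f i) := by
  intro L hL p hp
  let scale : Pt n ≃L[ℝ] Pt n :=
    (ContinuousLinearEquiv.refl ℝ _).prodCongr
      (ContinuousLinearEquiv.smulLeft (R₁ := ℝ) (Units.mk0 L hL.ne'))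
  have hhom : f ∘ scale =ᶠ[𝓝 p] fun q => L ^ k * f q := by
    filter_upwards [(isOpen_OmegaSet hU).mem_nhds hp] with q hq using hf L hL q hq
  have hscale : scale (0, Pi.single i 1) = L • ((0, Pi.single i 1) : Pt n) :=
    Prod.ext (smul_zero L).symm rfl
  have hderiv : L * pdy f i (p.1, L • p.2) = L ^ k * pdy f i p :=
    calc L * pdy f i (p.1, L • p.2) = fderiv ℝ (f ∘ scale) p (0, Pi.single i 1) := by
          rw [scale.comp_right_fderiv, ContinuousLinearMap.comp_apply,
            ContinuousLinearEquiv.coe_coe, hscale, map_smul]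
          rfl
      _ = fderiv ℝ (L ^ k • f) p (0, Pi.single i 1) := by
          rw [hhom.fderiv_eq]
          rfl
      _ = L ^ k * pdy f i p := by
          rw [fderiv_const_smul_field]
          rfl
  rw [zpow_sub_one₀ hL.ne', mul_right_comm, ← hderiv]
  field_simp

theorem PosHomog.sq (hf : PosHomog U k f) : PosHomog U (2 * k) (fun q => f q ^ 2) := by
  intro L hL p hp
  dsimp only
  rw [hf L hL p hp, mul_pow, mul_comm 2 k, zpow_mul]
  norm_cast

end Homogeneous

section Spray

open scoped Matrix.Norms.Operator

variable {n : ℕ} {U : Set (Fin n → ℝ)} {G : Fin n → Pt n → ℝ} {F : Pt n → ℝ}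
  {g ginv T H : Fin n → Fin n → Pt n → ℝ} {p : Pt n}

/-- The spray as a vector field `(y, -2G)` on the tangent space, so that `S(f)` is the derivative
of `f` in the direction `sprayVector G`. -/
def sprayVector (G : Fin n → Pt n → ℝ) (p : Pt n) : Pt n :=
  (p.2, fun k => -(2 * G k p))

/-- A two-index family of functions as a matrix-valued function: the first index is the row,
whatever the variance of the tensor. -/
def tensorMatrix (T : Fin n → Fin n → Pt n → ℝ) (q : Pt n) : Matrix (Fin n) (Fin n) ℝ :=
  Matrix.of fun i j => T i j q

/-- The `(1,1)`-tensor `F Σ_k g^{ik} T_{kj}` obtained from a `(0,2)`-tensor `T`; the tensor `H` of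
the theorem is the case where `T` is the fibre Hessian of `F̃`. -/
def scaledRaise (F : Pt n → ℝ) (ginv T : Fin n → Fin n → Pt n → ℝ) (i j : Fin n) (q : Pt n) : ℝ :=
  F q * ∑ k, ginv i k q * T k j q

theorem tensorMatrix_scaledRaise (F : Pt n → ℝ) (ginv T : Fin n → Fin n → Pt n → ℝ) (q : Pt n) :
    tensorMatrix (scaledRaise F ginv T) q = F q • (tensorMatrix ginv q * tensorMatrix T q) := by
  ext i j
  simp [tensorMatrix, scaledRaise, Matrix.mul_apply]

theorem Sop_eq_fderiv (G : Fin n → Pt n → ℝ) (f : Pt n → ℝ) (p : Pt n) :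
    Sop G f p = fderiv ℝ f p (sprayVector G p) := by
  have hsplit : sprayVector G p = (p.2, 0) + (0, fun k => -(2 * G k p)) := by simp [sprayVector]
  rw [hsplit, map_add, ← dotProduct_pdx, ← dotProduct_pdy]
  simp only [Sop, dotProduct, ← Finset.sum_add_distrib, neg_mul, sub_eq_add_neg]

theorem differentiableAt_tensorMatrix :
    DifferentiableAt ℝ (tensorMatrix T) p ↔ ∀ i j, DifferentiableAt ℝ (T i j) p :=
  differentiableAt_matrix

theorem fderiv_tensorMatrix_sprayVector (hT : DifferentiableAt ℝ (tensorMatrix T) p) (i j : Fin n) :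
    fderiv ℝ (tensorMatrix T) p (sprayVector G p) i j = Sop G (T i j) p := by
  rw [Sop_eq_fderiv, fderiv_matrix_apply hT]
  rfl

theorem fderiv_tensorMatrix_of_nablaT_eq_zero (hT : DifferentiableAt ℝ (tensorMatrix T) p)
    (hnabla : ∀ i j, nablaT G T i j p = 0) :
    fderiv ℝ (tensorMatrix T) p (sprayVector G p) =
      (tensorMatrix (Ncoef G) p)ᵀ * tensorMatrix T p
        + tensorMatrix T p * tensorMatrix (Ncoef G) p := by
  ext i j
  rw [fderiv_tensorMatrix_sprayVector hT, sub_eq_zero.1 (hnabla i j), Finset.sum_add_distrib]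
  simp [tensorMatrix, Matrix.mul_apply, mul_comm]

theorem fderiv_tensorMatrix_eq_commutator_iff (hH : DifferentiableAt ℝ (tensorMatrix H) p) :
    fderiv ℝ (tensorMatrix H) p (sprayVector G p) =
        tensorMatrix H p * tensorMatrix (Ncoef G) p - tensorMatrix (Ncoef G) p * tensorMatrix H p ↔
      ∀ i j, Sop G (H i j) p + ∑ k, Ncoef G i k p * H k j p - ∑ k, Ncoef G k j p * H i k p = 0 := by
  simp only [← Matrix.ext_iff, fderiv_tensorMatrix_sprayVector hH]
  refine forall₂_congr fun i j => ?_
  simp only [tensorMatrix, Matrix.sub_apply, Matrix.mul_apply, Matrix.of_apply,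
    mul_comm (H _ _ p), sub_eq_zero, eq_sub_iff_add_eq]

theorem Sop_trace_pow_eq_zero (hH : DifferentiableAt ℝ (tensorMatrix H) p)
    (hinvariant : ∀ i j,
      Sop G (H i j) p + ∑ k, Ncoef G i k p * H k j p - ∑ k, Ncoef G k j p * H i k p = 0) (m : ℕ) :
    Sop G (fun q => (tensorMatrix H q ^ m).trace) p = 0 := by
  have hlax := (fderiv_tensorMatrix_eq_commutator_iff hH).2 hinvariant
  have hlax_pow : fderiv ℝ (fun q => tensorMatrix H q ^ m) p (sprayVector G p) =
      tensorMatrix H p ^ m * tensorMatrix (Ncoef G) p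
        - tensorMatrix (Ncoef G) p * tensorMatrix H p ^ m :=
    fderiv_pow_eq_commutator hH hlax m
  rw [Sop_eq_fderiv, fderiv_trace_apply (hH.fun_pow m), hlax_pow, Matrix.trace_sub,
    Matrix.trace_mul_comm, sub_self]

theorem IsSpray.sprayVector_snd (hU : IsOpen U) (hG : IsSpray U G) (hp : p ∈ OmegaSet U) :
    (sprayVector G p).2 = -(tensorMatrix (Ncoef G) p *ᵥ p.2) := by
  ext k
  have heuler := (hG k).2.euler hp (differentiableAt_of_contDiffOn_OmegaSet hU (hG k).1 hp)
  simp only [sprayVector, Pi.neg_apply, neg_inj]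
  rw [Matrix.mulVec, dotProduct_comm]
  exact_mod_cast heuler.symm

theorem IsFinsler.differentiableAt_metricTensor (hU : IsOpen U) (hF : IsFinsler U F)
    (hp : p ∈ OmegaSet U) : DifferentiableAt ℝ (tensorMatrix (metricTensor F)) p :=
  differentiableAt_tensorMatrix.2 fun i j =>
    (differentiableAt_of_contDiffOn_OmegaSet hU
      (contDiffOn_pdy hU (contDiffOn_pdy hU (hF.1.pow 2) j) i) hp).const_mul _

theorem IsFinsler.sq_eq_dotProduct_metricTensor (hU : IsOpen U) (hF : IsFinsler U F)
    (hp : p ∈ OmegaSet U) : F p ^ 2 = p.2 ⬝ᵥ tensorMatrix (metricTensor F) p *ᵥ p.2 := by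
  set E : Pt n → ℝ := fun q => F q ^ 2
  have hsmooth : ContDiffOn ℝ (⊤ : ℕ∞) E (OmegaSet U) := hF.1.pow 2
  have hhom : PosHomog U 2 E := hF.2.2.1.sq
  have heuler : (p.2 ⬝ᵥ fun j => pdy E j p) = 2 * E p := by
    exact_mod_cast hhom.euler hp (differentiableAt_of_contDiffOn_OmegaSet hU hsmooth hp)
  have heuler_pdy (j : Fin n) : (p.2 ⬝ᵥ fun i => pdyy E i j p) = pdy E j p := by
    simpa [pdyy] using (hhom.pdy_of_isOpen hU j).euler hp
      (differentiableAt_of_contDiffOn_OmegaSet hU (contDiffOn_pdy hU hsmooth j) hp)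
  have hvecMul : p.2 ᵥ* tensorMatrix (metricTensor F) p = (1 / 2 : ℝ) • fun j => pdy E j p := by
    ext j
    simp only [Pi.smul_apply, ← heuler_pdy j]
    exact dotProduct_smul (1 / 2 : ℝ) p.2 fun i => pdyy E i j p
  rw [Matrix.dotProduct_mulVec, hvecMul, smul_dotProduct, dotProduct_comm, heuler]
  simp [E]

theorem IsFinsler.fderiv_sprayVector_eq_zero (hU : IsOpen U) (hG : IsSpray U G)
    (hF : IsFinsler U F) (hp : p ∈ OmegaSet U)
    (hnabla : ∀ i j, nablaT G (metricTensor F) i j p = 0) :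
    fderiv ℝ F p (sprayVector G p) = 0 := by
  have hg := hF.differentiableAt_metricTensor hU hp
  have hsq : (fun q => F q ^ 2) =ᶠ[𝓝 p]
      fun q => q.2 ⬝ᵥ tensorMatrix (metricTensor F) q *ᵥ q.2 := by
    filter_upwards [(isOpen_OmegaSet hU).mem_nhds hp] with q hq
      using hF.sq_eq_dotProduct_metricTensor hU hq
  have hsnd : fderiv ℝ (fun q : Pt n => q.2) p (sprayVector G p) =
      -(tensorMatrix (Ncoef G) p *ᵥ p.2) := by
    rw [fderiv_snd]
    exact hG.sprayVector_snd hU hp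
  have hzero : fderiv ℝ (fun q => F q ^ 2) p (sprayVector G p) = 0 := by
    rw [hsq.fderiv_eq]
    exact fderiv_dotProduct_mulVec_eq_zero hg differentiableAt_snd
      (fderiv_tensorMatrix_of_nablaT_eq_zero hg hnabla) hsnd
  rw [fderiv_fun_pow 2 (differentiableAt_of_contDiffOn_OmegaSet hU hF.1 hp)] at hzero
  simpa [(hF.2.1 p hp).ne'] using hzero

theorem tensorMatrix_scaledRaise_eventuallyEq
    (hinv : ∀ᶠ q in 𝓝 p, tensorMatrix g q * tensorMatrix ginv q = 1) :
    tensorMatrix (scaledRaise F ginv T) =ᶠ[𝓝 p]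
      fun q => F q • (Ring.inverse (tensorMatrix g q) * tensorMatrix T q) := by
  filter_upwards [hinv] with q hq
  rw [tensorMatrix_scaledRaise, ← Matrix.nonsing_inv_eq_ringInverse, Matrix.inv_eq_right_inv hq]

theorem differentiableAt_tensorMatrix_scaledRaise (hF : DifferentiableAt ℝ F p)
    (hg : DifferentiableAt ℝ (tensorMatrix g) p) (hT : DifferentiableAt ℝ (tensorMatrix T) p)
    (hinv : ∀ᶠ q in 𝓝 p, tensorMatrix g q * tensorMatrix ginv q = 1) :
    DifferentiableAt ℝ (tensorMatrix (scaledRaise F ginv T)) p :=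
  have hunit := IsUnit.of_mul_eq_one _ hinv.self_of_nhds
  (hF.fun_smul ((hg.inverse hunit).fun_mul hT)).congr_of_eventuallyEq
    (tensorMatrix_scaledRaise_eventuallyEq hinv)

theorem fderiv_tensorMatrix_scaledRaise_eq_commutator (hF : DifferentiableAt ℝ F p)
    (hg : DifferentiableAt ℝ (tensorMatrix g) p) (hT : DifferentiableAt ℝ (tensorMatrix T) p)
    (hinv : ∀ᶠ q in 𝓝 p, tensorMatrix g q * tensorMatrix ginv q = 1)
    (hF' : fderiv ℝ F p (sprayVector G p) = 0) (hnabla_g : ∀ i j, nablaT G g i j p = 0)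
    (hnabla_T : ∀ i j, nablaT G T i j p = 0) :
    fderiv ℝ (tensorMatrix (scaledRaise F ginv T)) p (sprayVector G p) =
      tensorMatrix (scaledRaise F ginv T) p * tensorMatrix (Ncoef G) p
        - tensorMatrix (Ncoef G) p * tensorMatrix (scaledRaise F ginv T) p := by
  have hunit : IsUnit (tensorMatrix g p) := IsUnit.of_mul_eq_one _ hinv.self_of_nhds
  have hlocal := tensorMatrix_scaledRaise_eventuallyEq (F := F) (T := T) hinv
  have hraise := fderiv_ringInverse_mul_eq_commutator hg hT hunit
    (fderiv_tensorMatrix_of_nablaT_eq_zero hg hnabla_g)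
    (fderiv_tensorMatrix_of_nablaT_eq_zero hT hnabla_T)
  rw [hlocal.fderiv_eq, hlocal.eq_of_nhds]
  exact fderiv_smul_eq_commutator hF ((hg.inverse hunit).fun_mul hT) hF' hraise

end Spray

theorem statement12_general {n : ℕ} (U : Set (Fin n → ℝ)) (hU : IsOpen U)
    (G : Fin n → Pt n → ℝ) (hG : IsSpray U G)
    (F : Pt n → ℝ) (hF : IsFinsler U F)
    (T ginv : Fin n → Fin n → Pt n → ℝ)
    (hT : ∀ i j, DifferentiableOn ℝ (T i j) (OmegaSet U))
    (hinv : ∀ p ∈ OmegaSet U, tensorMatrix (metricTensor F) p * tensorMatrix ginv p = 1)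
    (h1 : ∀ i j, ∀ p ∈ OmegaSet U, nablaT G (metricTensor F) i j p = 0)
    (h2 : ∀ i j, ∀ p ∈ OmegaSet U, nablaT G T i j p = 0) :
    (∀ i j, ∀ p ∈ OmegaSet U,
        Sop G (scaledRaise F ginv T i j) p
            + ∑ k, Ncoef G i k p * scaledRaise F ginv T k j p
            - ∑ k, Ncoef G k j p * scaledRaise F ginv T i k p = 0) ∧
      (∀ m : ℕ, ∀ p ∈ OmegaSet U,
        Sop G (fun q => Matrix.trace (tensorMatrix (scaledRaise F ginv T) q ^ m)) p = 0) := by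
  have hpoint (p) (hp : p ∈ OmegaSet U) :
      DifferentiableAt ℝ (tensorMatrix (scaledRaise F ginv T)) p ∧ ∀ i j,
        Sop G (scaledRaise F ginv T i j) p
          + ∑ k, Ncoef G i k p * scaledRaise F ginv T k j p
          - ∑ k, Ncoef G k j p * scaledRaise F ginv T i k p = 0 := by
    have hnhds := (isOpen_OmegaSet hU).mem_nhds hp
    have hFd := differentiableAt_of_contDiffOn_OmegaSet hU hF.1 hp
    have hgd := hF.differentiableAt_metricTensor hU hp
    have hTd := differentiableAt_tensorMatrix.2 fun i j => (hT i j).differentiableAt hnhds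
    have hinv' := Filter.eventually_of_mem hnhds hinv
    have hF' := hF.fderiv_sprayVector_eq_zero hU hG hp fun i j => h1 i j p hp
    have hHd := differentiableAt_tensorMatrix_scaledRaise hFd hgd hTd hinv'
    exact ⟨hHd, (fderiv_tensorMatrix_eq_commutator_iff hHd).1 <|
      fderiv_tensorMatrix_scaledRaise_eq_commutator hFd hgd hTd hinv' hF'
        (fun i j => h1 i j p hp) fun i j => h2 i j p hp⟩
  exact ⟨fun i j p hp => (hpoint p hp).2 i j,
    fun m p hp => Sop_trace_pow_eq_zero (hpoint p hp).1 (hpoint p hp).2 m⟩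

/-- if `S` is the geodesic spray of `F` (`∇g_{ij} = 0`) and
`∇(∂²F̃/∂y^i∂y^j) = 0`, then the tensor `H^i_j = F Σ_k g^{ik} ∂²F̃/∂y^k∂y^j` is geodesically
invariant, `∇H^i_j = 0`, and for every `m ≥ 1` the trace of `H^m` is a first integral:
`S(tr(H^m)) = 0`. -/
theorem statement12 {n : ℕ} (hn : 1 ≤ n) (U : Set (Fin n → ℝ)) (hU : IsOpen U)
    (G : Fin n → Pt n → ℝ) (hG : IsSpray U G)
    (F : Pt n → ℝ) (hF : IsFinsler U F)
    (Ft : Pt n → ℝ) (hFt : IsFinsler U Ft)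
    (ginv : Fin n → Fin n → Pt n → ℝ)
    (hinv : ∀ p ∈ OmegaSet U,
        Matrix.of (fun i j => metricTensor F i j p) * Matrix.of (fun i j => ginv i j p) = 1 ∧
        Matrix.of (fun i j => ginv i j p) * Matrix.of (fun i j => metricTensor F i j p) = 1)
    (h1 : ∀ i j, ∀ p ∈ OmegaSet U, nablaT G (metricTensor F) i j p = 0)
    (h2 : ∀ i j, ∀ p ∈ OmegaSet U, nablaT G (pdyy Ft) i j p = 0) :
    (∀ i j, ∀ p ∈ OmegaSet U,
        Sop G (Hten F Ft ginv i j) p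
            + ∑ k, Ncoef G i k p * Hten F Ft ginv k j p
            - ∑ k, Ncoef G k j p * Hten F Ft ginv i k p = 0) ∧
      (∀ m : ℕ, 0 < m → ∀ p ∈ OmegaSet U,
        Sop G (fun q => Matrix.trace ((Matrix.of (fun i j => Hten F Ft ginv i j q)) ^ m)) p
          = 0) := by
  have hHess (i j : Fin n) : DifferentiableOn ℝ (pdyy Ft i j) (OmegaSet U) :=
    (contDiffOn_pdy hU (contDiffOn_pdy hU hFt.1 j) i).differentiableOn (by simp)
  have hmain := statement12_general U hU G hG F hF (pdyy Ft) ginv hHess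
    (fun p hp => (hinv p hp).1) h1 h2
  exact ⟨hmain.1, fun m _ => hmain.2 m⟩
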